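/- arXiv:2312.09889 — 7 statements merged into one kernel-verified Lean document; each statement's English description precedes it below -/
import Mathlib

section
/- The functor ι : Δ → ∗⫽Δ sending [n] to ([n], n) and a monotone map to itself is fully faithful, and it admits a right adjoint κ : ∗⫽Δ → Δ sending ([n], k) to [k] and a morphism a : ([n], k) → ([m], l) to the restricted monotone map [k] → [l], i ↦ a(i) (well defined since a(i) ≤ a(k) ≤ l). -/
open CategoryTheory

/-- An object of the lax slice category `∗⫽Δ`: a pair `([n], k)` with `0 ≤ k ≤ n`. -/
structure LaxPt where
  obj : SimplexCategory
  pt : Fin (obj.len + 1)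

/-- A morphism `([n], k) ⟶ ([m], l)` of `∗⫽Δ`: a monotone map `a : [n] → [m]`
with `a k ≤ l`. -/
@[ext]
structure LaxPt.Hom (A B : LaxPt) where
  map : A.obj ⟶ B.obj
  le : map.toOrderHom A.pt ≤ B.pt

instance : Category LaxPt where
  Hom := LaxPt.Hom
  id A := ⟨𝟙 A.obj, le_refl _⟩
  comp := fun {A B C} (f : LaxPt.Hom A B) (g : LaxPt.Hom B C) =>
    ⟨f.map ≫ g.map, le_trans (g.map.toOrderHom.monotone f.le) g.le⟩
  id_comp := fun {A B} (f : LaxPt.Hom A B) => by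
    apply LaxPt.Hom.ext; exact Category.id_comp f.map
  comp_id := fun {A B} (f : LaxPt.Hom A B) => by
    apply LaxPt.Hom.ext; exact Category.comp_id f.map
  assoc := fun f g h => by
    apply LaxPt.Hom.ext; exact Category.assoc _ _ _

/-- The functor `ι : Δ ⥤ ∗⫽Δ`, `[n] ↦ ([n], n)`, sending a monotone map to itself. -/
def iota : SimplexCategory ⥤ LaxPt where
  obj n := ⟨n, Fin.last n.len⟩
  map {n m} f := LaxPt.Hom.mk f (Fin.le_last _)
  map_id _ := rfl
  map_comp _ _ := rfl

/-- The functor `κ : ∗⫽Δ ⥤ Δ`, `([n], k) ↦ [k]`, sending `a : ([n], k) ⟶ ([m], l)` to the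
restricted monotone map `[k] → [l]`, `i ↦ a i` (well defined since `a i ≤ a k ≤ l`). -/
def kappa : LaxPt ⥤ SimplexCategory where
  obj A := SimplexCategory.mk (A.pt : ℕ)
  map := fun {A B} (f : LaxPt.Hom A B) => SimplexCategory.mkHom
    ⟨fun i => ⟨f.map.toOrderHom (Fin.castLE (Nat.succ_le_succ A.pt.is_le) i),
        by
          have h1 : (f.map.toOrderHom (Fin.castLE (Nat.succ_le_succ A.pt.is_le) i) : ℕ) ≤
              (f.map.toOrderHom A.pt : ℕ) :=
            f.map.toOrderHom.monotone (by simp [Fin.le_def]; exact i.is_le)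
          have h2 : (f.map.toOrderHom A.pt : ℕ) ≤ (B.pt : ℕ) := f.le
          omega⟩,
      fun i j hij => by
        apply Fin.mk_le_mk.mpr
        apply f.map.toOrderHom.monotone
        rw [Fin.le_def]
        exact hij⟩
  map_id A := by
    apply SimplexCategory.Hom.ext
    ext i
    rfl
  map_comp f g := by
    apply SimplexCategory.Hom.ext
    ext i
    rfl

/-!
A monotone map `a : [n] → [m]` with `a n ≤ l` takes all its values in the initial segment `[l]` of
`[m]`, so a morphism `([n], n) ⟶ ([m], l)` is the same as a monotone map `[n] → [l]`. The universal
morphism is thus the inclusion `([l], l) ⟶ ([m], l)`; it is an identity when `l = m`, and `κ` always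
restricts it to an identity, which are the two triangle identities.
-/

/-- The full faithfulness of `ι`, as an inverse to its action on morphisms: the condition `a n ≤ m`
on a morphism `([n], n) ⟶ ([m], m)` is vacuous. -/
def iotaFullyFaithful : iota.FullyFaithful where
  preimage f := f.map

/-- The identification of `κ (ι [n])` with `[n]`, oriented so as to be the unit of `ι ⊣ κ`. -/
def idIsoIotaCompKappa : 𝟭 SimplexCategory ≅ iota ⋙ kappa :=
  NatIso.ofComponents fun n ↦ Iso.refl n

namespace LaxPt

/-- The inclusion of the initial segment `[k]` of `[n]`, as a morphism `([k], k) ⟶ ([n], k)`; it is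
the component at `([n], k)` of the counit of `ι ⊣ κ`. -/
def initialSegment (A : LaxPt) : iota.obj (kappa.obj A) ⟶ A where
  map := SimplexCategory.subinterval 0 A.pt (by simpa only [Nat.zero_add] using A.pt.is_le)
  le := le_rfl

-- On underlying elements, both composites are `i ↦ f i` for `i ≤ A.pt`.
theorem iota_map_kappa_map_comp_initialSegment {A B : LaxPt} (f : A ⟶ B) :
    iota.map (kappa.map f) ≫ B.initialSegment = A.initialSegment ≫ f :=
  rfl

theorem initialSegment_iota_obj (n : SimplexCategory) :
    (iota.obj n).initialSegment = 𝟙 (iota.obj n) :=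
  rfl

theorem kappa_map_initialSegment (A : LaxPt) :
    kappa.map A.initialSegment = 𝟙 (kappa.obj A) :=
  rfl

end LaxPt

/-- The adjunction `ι ⊣ κ`, given by its unit and counit so that the triangle identities reduce to
statements about initial segments. -/
def iotaAdjKappa : iota ⊣ kappa where
  unit := idIsoIotaCompKappa.hom
  counit :=
    { app := LaxPt.initialSegment
      naturality _ _ f := LaxPt.iota_map_kappa_map_comp_initialSegment f }
  left_triangle_components n := LaxPt.initialSegment_iota_obj n
  right_triangle_components A := LaxPt.kappa_map_initialSegment A

/-- `ι` is fully faithful and admits `κ` as a right adjoint. -/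
theorem iota_fullyFaithful_and_adjoint :
    iota.Full ∧ iota.Faithful ∧ Nonempty (iota ⊣ kappa) :=
  ⟨iotaFullyFaithful.full, iotaFullyFaithful.faithful, ⟨iotaAdjKappa⟩⟩
end

section
/- For every simplicial set X, the functor ι_X : Δ/X → (∗⫽Δ)/X sending ([n], x) to ([n], n, x) and a morphism to itself is fully faithful, and it admits a right adjoint κ_X : (∗⫽Δ)/X → Δ/X sending ([m], l, y) to ([l], X(incl)(y)), where incl : [l] ⊆ [m] is the inclusion of the initial segment. -/
/-!
The functor `ι_X` is fully faithful because the condition `a n ≤ m` on a morphism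
`([n], n, x) ⟶ ([m], m, y)` is automatic. It is left adjoint to `κ_X` because a monotone map
`a : [n] → [m]` satisfies `a n ≤ l` if and only if it factors, necessarily uniquely, through the
initial segment `[l] ⊆ [m]`.
-/

open CategoryTheory Simplicial

universe u

/-- An object of the category of simplices `Δ/X` of a simplicial set `X`:
a pair `([n], x)` with `x ∈ X_n`. -/
structure SplxOver (X : SSet.{u}) where
  obj : SimplexCategory
  simplex : X.obj (Opposite.op obj)

/-- A morphism `([n], x) ⟶ ([m], y)` of `Δ/X`: a monotone map `a : [n] → [m]` with
`X(a)(y) = x`. -/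
@[ext]
structure SplxOver.Hom {X : SSet.{u}} (A B : SplxOver X) where
  map : A.obj ⟶ B.obj
  fac : X.map map.op B.simplex = A.simplex

instance {X : SSet.{u}} : Category (SplxOver X) where
  Hom := SplxOver.Hom
  id A := ⟨𝟙 A.obj, by rw [op_id, FunctorToTypes.map_id_apply]⟩
  comp := fun {A B C} (f : SplxOver.Hom A B) (g : SplxOver.Hom B C) =>
    ⟨f.map ≫ g.map, by rw [op_comp, FunctorToTypes.map_comp_apply, g.fac, f.fac]⟩
  id_comp := fun {A B} (f : SplxOver.Hom A B) => by
    apply SplxOver.Hom.ext; exact Category.id_comp f.map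
  comp_id := fun {A B} (f : SplxOver.Hom A B) => by
    apply SplxOver.Hom.ext; exact Category.comp_id f.map
  assoc f g h := by
    apply SplxOver.Hom.ext; exact Category.assoc _ _ _

/-- A morphism of `Δ/X` is a last-vertex morphism if it preserves the last vertex. -/
def lastVertex (X : SSet.{u}) : MorphismProperty (SplxOver X) :=
  fun _ _ a => a.map.toOrderHom (Fin.last _) = Fin.last _
/-- An object of the category `(∗⫽Δ)/X`: a triple `([n], k, x)` with `0 ≤ k ≤ n` and
`x ∈ X_n`. -/
structure LaxPtOver (X : SSet.{u}) where
  obj : SimplexCategory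
  pt : Fin (obj.len + 1)
  simplex : X.obj (Opposite.op obj)

/-- A morphism `([n], k, x) ⟶ ([m], l, y)` of `(∗⫽Δ)/X`: a monotone map `a : [n] → [m]`
with `a k ≤ l` and `X(a)(y) = x`. -/
@[ext]
structure LaxPtOver.Hom {X : SSet.{u}} (A B : LaxPtOver X) where
  map : A.obj ⟶ B.obj
  le : map.toOrderHom A.pt ≤ B.pt
  fac : X.map map.op B.simplex = A.simplex

instance {X : SSet.{u}} : Category (LaxPtOver X) where
  Hom := LaxPtOver.Hom
  id A := ⟨𝟙 A.obj, le_refl _, by rw [op_id, FunctorToTypes.map_id_apply]⟩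
  comp := fun {A B C} (f : LaxPtOver.Hom A B) (g : LaxPtOver.Hom B C) =>
    ⟨f.map ≫ g.map, le_trans (g.map.toOrderHom.monotone f.le) g.le,
      by rw [op_comp, FunctorToTypes.map_comp_apply, g.fac, f.fac]⟩
  id_comp := fun {A B} (f : LaxPtOver.Hom A B) => by
    apply LaxPtOver.Hom.ext; exact Category.id_comp f.map
  comp_id := fun {A B} (f : LaxPtOver.Hom A B) => by
    apply LaxPtOver.Hom.ext; exact Category.comp_id f.map
  assoc f g h := by
    apply LaxPtOver.Hom.ext; exact Category.assoc _ _ _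

/-- The functor `ι_X : Δ/X ⥤ (∗⫽Δ)/X`, `([n], x) ↦ ([n], n, x)`, sending a morphism
to itself. -/
def iotaOver (X : SSet.{u}) : SplxOver X ⥤ LaxPtOver X where
  obj A := ⟨A.obj, Fin.last A.obj.len, A.simplex⟩
  map := fun {A B} (f : SplxOver.Hom A B) =>
    LaxPtOver.Hom.mk f.map (Fin.le_last _) f.fac
  map_id _ := rfl
  map_comp _ _ := rfl
/-- The inclusion `[k] ⊆ [n]` of the initial segment determined by an object
`([n], k, x)` of `(∗⫽Δ)/X`. -/
def segIncl {X : SSet.{u}} (A : LaxPtOver X) :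
    SimplexCategory.mk (A.pt : ℕ) ⟶ A.obj :=
  SimplexCategory.mkHom
    ⟨Fin.castLE (Nat.succ_le_succ A.pt.is_le), fun i j hij => by exact hij⟩

/-- The restriction `[k] → [l]`, `i ↦ a i`, of a morphism `a : ([n], k, x) ⟶ ([m], l, y)`. -/
def laxRestrict {X : SSet.{u}} {A B : LaxPtOver X} (f : LaxPtOver.Hom A B) :
    SimplexCategory.mk (A.pt : ℕ) ⟶ SimplexCategory.mk (B.pt : ℕ) :=
  SimplexCategory.mkHom
    ⟨fun i => ⟨f.map.toOrderHom (Fin.castLE (Nat.succ_le_succ A.pt.is_le) i),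
        by
          have h1 : (f.map.toOrderHom (Fin.castLE (Nat.succ_le_succ A.pt.is_le) i) : ℕ) ≤
              (f.map.toOrderHom A.pt : ℕ) :=
            f.map.toOrderHom.monotone (by rw [Fin.le_def]; exact i.is_le)
          have h2 : (f.map.toOrderHom A.pt : ℕ) ≤ (B.pt : ℕ) := f.le
          omega⟩,
      fun i j hij => by
        apply Fin.mk_le_mk.mpr
        apply f.map.toOrderHom.monotone
        rw [Fin.le_def]
        exact hij⟩

lemma laxRestrict_comm {X : SSet.{u}} {A B : LaxPtOver X} (f : LaxPtOver.Hom A B) :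
    laxRestrict f ≫ segIncl B = segIncl A ≫ f.map := rfl

/-- The functor `κ_X : (∗⫽Δ)/X ⥤ Δ/X`, `([m], l, y) ↦ ([l], X(incl)(y))`, where
`incl : [l] ⊆ [m]` is the inclusion of the initial segment. -/
def kappaOver (X : SSet.{u}) : LaxPtOver X ⥤ SplxOver X where
  obj A := ⟨SimplexCategory.mk (A.pt : ℕ), X.map (segIncl A).op A.simplex⟩
  map := fun {A B} (f : LaxPtOver.Hom A B) =>
    SplxOver.Hom.mk (laxRestrict f) (by
      rw [← FunctorToTypes.map_comp_apply, ← op_comp, laxRestrict_comm, op_comp,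
        FunctorToTypes.map_comp_apply, f.fac])
  map_id _ := rfl
  map_comp _ _ := rfl

/-- Full faithfulness of `ι_X`, as an explicit inverse to its action on morphisms. -/
def iotaOverFullyFaithful (X : SSet.{u}) : (iotaOver X).FullyFaithful where
  preimage f := SplxOver.Hom.mk (LaxPtOver.Hom.map f) (LaxPtOver.Hom.fac f)
  map_preimage _ := rfl
  preimage_map _ := rfl

section

variable {X : SSet.{u}}

lemma segIncl_last (B : LaxPtOver X) :
    (segIncl B).toOrderHom (Fin.last (B.pt : ℕ)) = B.pt := rfl

instance mono_segIncl (B : LaxPtOver X) : Mono (segIncl B) :=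
  SimplexCategory.mono_iff_injective.mpr
    (Fin.castLE_injective (Nat.succ_le_succ B.pt.is_le))

lemma segIncl_iotaOver_obj (A : SplxOver X) : segIncl ((iotaOver X).obj A) = 𝟙 A.obj := rfl

lemma laxRestrict_comp_segIncl_of_iotaOver {A : SplxOver X} {B : LaxPtOver X}
    (f : LaxPtOver.Hom ((iotaOver X).obj A) B) : laxRestrict f ≫ segIncl B = f.map := by
  rw [laxRestrict_comm, segIncl_iotaOver_obj]
  exact Category.id_comp f.map

/-- The counit of `ι_X ⊣ κ_X` at `B = ([m], l, y)`: the inclusion `[l] ⊆ [m]`, as a morphism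
`([l], l, X(incl)(y)) ⟶ ([m], l, y)`. -/
def iotaKappaCounit (B : LaxPtOver X) : (iotaOver X).obj ((kappaOver X).obj B) ⟶ B :=
  LaxPtOver.Hom.mk (segIncl B) (segIncl_last B).le rfl

/-- The morphism `A ⟶ κ_X B` corresponding to `f : ι_X A ⟶ B`: the underlying monotone map of `f`
with codomain cut down to the initial segment of `B`. -/
def iotaKappaLift {A : SplxOver X} {B : LaxPtOver X}
    (f : LaxPtOver.Hom ((iotaOver X).obj A) B) : A ⟶ (kappaOver X).obj B :=
  SplxOver.Hom.mk (laxRestrict f) (by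
    have fac_comp : X.map (laxRestrict f ≫ segIncl B).op B.simplex = A.simplex := by
      rw [laxRestrict_comp_segIncl_of_iotaOver]
      exact f.fac
    rwa [op_comp, Functor.map_comp_apply] at fac_comp)

lemma map_iotaKappaLift_comp_iotaKappaCounit {A : SplxOver X} {B : LaxPtOver X}
    (f : (iotaOver X).obj A ⟶ B) :
    (iotaOver X).map (iotaKappaLift f) ≫ iotaKappaCounit B = f :=
  LaxPtOver.Hom.ext (laxRestrict_comp_segIncl_of_iotaOver f)

lemma map_comp_iotaKappaCounit_injective (A : SplxOver X) (B : LaxPtOver X) :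
    Function.Injective fun g : A ⟶ (kappaOver X).obj B =>
      (iotaOver X).map g ≫ iotaKappaCounit B :=
  fun _ _ h => SplxOver.Hom.ext
    ((cancel_mono (segIncl B)).mp (congrArg LaxPtOver.Hom.map h))

/-- The bijection `Hom(ι_X A, B) ≃ Hom(A, κ_X B)` underlying the adjunction, with inverse
given by composition with the counit. -/
def iotaKappaHomEquiv (A : SplxOver X) (B : LaxPtOver X) :
    ((iotaOver X).obj A ⟶ B) ≃ (A ⟶ (kappaOver X).obj B) where
  toFun f := iotaKappaLift f
  invFun g := (iotaOver X).map g ≫ iotaKappaCounit B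
  left_inv := map_iotaKappaLift_comp_iotaKappaCounit
  right_inv _ :=
    map_comp_iotaKappaCounit_injective A B (map_iotaKappaLift_comp_iotaKappaCounit _)

end

/-- The adjunction `ι_X ⊣ κ_X`, obtained from the universal property of its counit. -/
def iotaKappaAdjunction (X : SSet.{u}) : iotaOver X ⊣ kappaOver X :=
  Adjunction.mkOfHomEquiv
    { homEquiv := iotaKappaHomEquiv
      homEquiv_naturality_left_symm := fun f g =>
        show (iotaOver X).map (f ≫ g) ≫ _ = (iotaOver X).map f ≫ (iotaOver X).map g ≫ _ by
          rw [Functor.map_comp, Category.assoc]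
      homEquiv_naturality_right := fun _ _ => rfl }

/-- for every simplicial set `X`, the functor `ι_X : Δ/X ⥤ (∗⫽Δ)/X`,
`([n], x) ↦ ([n], n, x)`, is fully faithful and admits `κ_X` as a right adjoint. -/
theorem iotaOver_fullyFaithful_and_adjoint (X : SSet.{u}) :
    (iotaOver X).Full ∧ (iotaOver X).Faithful ∧ Nonempty (iotaOver X ⊣ kappaOver X) :=
  ⟨(iotaOverFullyFaithful X).full, (iotaOverFullyFaithful X).faithful,
    ⟨iotaKappaAdjunction X⟩⟩
end

section
/- Let F : C ⥤ D and G : D ⥤ C be functors with an adjunction F ⊣ G, and let W, V be classes of morphisms of C, D respectively such that F sends morphisms of W into V, G sends morphisms of V into W, every component of the unit id → G∘F lies in W, and every component of the counit F∘G → id lies in V. Then the composite of F with the localization functor q : D → D[V⁻¹] inverts W, and the induced functor C[W⁻¹] → D[V⁻¹] is an equivalence of categories; equivalently, q ∘ F : C ⥤ D[V⁻¹] exhibits D[V⁻¹] as the localization of C at W. -/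
open CategoryTheory

/-!
Whiskered with the localization functors `L₁` and `L₂`, the unit and the counit become isomorphisms
`L₁ ≅ (F ⋙ G) ⋙ L₁` and `(G ⋙ F) ⋙ L₂ ≅ L₂`. Natural isomorphisms between functors precomposed
with a localization functor descend to the localization, so these two make the functors induced by
`F` and `G` quasi-inverse equivalences.
-/

section

variable {C D C' D' : Type*} [Category C] [Category D] [Category C'] [Category D']
  {F : C ⥤ D} {G : D ⥤ C} {W : MorphismProperty C} {V : MorphismProperty D}
  (L₁ : C ⥤ C') [L₁.IsLocalization W] (L₂ : D ⥤ D') [L₂.IsLocalization V]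

theorem isLocalization_comp_of_iso
    (hF : W.IsInvertedBy (F ⋙ L₂)) (hG : V.IsInvertedBy (G ⋙ L₁))
    (α : (F ⋙ G) ⋙ L₁ ≅ L₁) (β : (G ⋙ F) ⋙ L₂ ≅ L₂) :
    (F ⋙ L₂).IsLocalization W := by
  let F' : C' ⥤ D' := Localization.lift (F ⋙ L₂) hF L₁
  let G' : D' ⥤ C' := Localization.lift (G ⋙ L₁) hG L₂
  let eF : L₁ ⋙ F' ≅ F ⋙ L₂ := Localization.fac (F ⋙ L₂) hF L₁
  let eG : L₂ ⋙ G' ≅ G ⋙ L₁ := Localization.fac (G ⋙ L₁) hG L₂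
  let α' : (F ⋙ L₂) ⋙ G' ≅ L₁ :=
    Functor.associator _ _ _ ≪≫ Functor.isoWhiskerLeft F eG ≪≫
      (Functor.associator _ _ _).symm ≪≫ α
  let β' : (G ⋙ L₁) ⋙ F' ≅ L₂ :=
    Functor.associator _ _ _ ≪≫ Functor.isoWhiskerLeft G eF ≪≫
      (Functor.associator _ _ _).symm ≪≫ β
  exact Functor.IsLocalization.of_equivalence_target L₁ W (F ⋙ L₂)
    (Localization.equivalence L₁ W L₂ V (F ⋙ L₂) F' (G ⋙ L₁) G' α' β') eF

theorem adjunction_descends_to_localization_general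
    (hF : W.IsInvertedBy (F ⋙ L₂)) (hG : V.IsInvertedBy (G ⋙ L₁))
    (η : 𝟭 C ⟶ F ⋙ G) (hη : ∀ X, IsIso (L₁.map (η.app X)))
    (ε : G ⋙ F ⟶ 𝟭 D) (hε : ∀ Y, IsIso (L₂.map (ε.app Y))) :
    (F ⋙ L₂).IsLocalization W := by
  have : IsIso (Functor.whiskerRight η L₁) := (NatTrans.isIso_iff_isIso_app _).2 hη
  have : IsIso (Functor.whiskerRight ε L₂) := (NatTrans.isIso_iff_isIso_app _).2 hε
  exact isLocalization_comp_of_iso L₁ L₂ hF hG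
    ((asIso (Functor.whiskerRight η L₁)).symm ≪≫ L₁.leftUnitor)
    (asIso (Functor.whiskerRight ε L₂) ≪≫ L₂.leftUnitor)

end

/-- given an adjunction `F ⊣ G` and classes of morphisms `W`, `V` such that
`F(W) ⊆ V`, `G(V) ⊆ W`, the unit components lie in `W` and the counit components lie in `V`,
the composite `q ∘ F : C ⥤ D[V⁻¹]` of `F` with the localization functor `q : D ⥤ D[V⁻¹]`
inverts `W` and exhibits `D[V⁻¹]` as the localization of `C` at `W`. -/
theorem adjunction_descends_to_localization
    {C : Type*} {D : Type*} [Category C] [Category D]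
    (F : C ⥤ D) (G : D ⥤ C) (adj : F ⊣ G)
    (W : MorphismProperty C) (V : MorphismProperty D)
    (hF : ∀ ⦃X Y : C⦄ (f : X ⟶ Y), W f → V (F.map f))
    (hG : ∀ ⦃X Y : D⦄ (g : X ⟶ Y), V g → W (G.map g))
    (hunit : ∀ X : C, W (adj.unit.app X))
    (hcounit : ∀ Y : D, V (adj.counit.app Y)) :
    (F ⋙ V.Q).IsLocalization W :=
  adjunction_descends_to_localization_general W.Q V.Q
    (fun _ _ f hf => V.Q_inverts _ (hF f hf)) (fun _ _ g hg => W.Q_inverts _ (hG g hg))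
    adj.unit (fun X => W.Q_inverts _ (hunit X)) adj.counit (fun Y => V.Q_inverts _ (hcounit Y))
end

section
/- For every simplicial set X, the fully faithful functor ι_X : Δ/X → (∗⫽Δ)/X, ([n], x) ↦ ([n], n, x), sends last-vertex morphisms to cocartesian morphisms, and the induced functor on (1-categorical) localizations (Δ/X)[lv⁻¹] → ((∗⫽Δ)/X)[cc⁻¹] is an equivalence of categories. -/
open CategoryTheory Simplicial

universe u

/-- A morphism `a : ([n], k, x) ⟶ ([m], l, y)` of `(∗⫽Δ)/X` is cocartesian if `a k = l`. -/
def cocart (X : SSet.{u}) : MorphismProperty (LaxPtOver X) :=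
  fun A B a => a.map.toOrderHom A.pt = B.pt

/-!
`ι_X` has a right adjoint: `([n], k, x) ↦ ([k], x|[k])`, because a map `a : [m] → [n]` with
`a m ≤ k` is the same as a map into the initial segment `[k] ⊆ [n]`. The adjoint sends cocartesian
morphisms to last-vertex morphisms, the unit consists of identity maps and the counit of the
inclusions `[k] → [n]`, which send `k` to `k`. Hence both the unit and the counit become
invertible after localization, and the adjunction descends to an equivalence.
-/

section Localization

open Functor

variable {C D J : Type*} [Category* C] [Category* D] [Category* J]

lemma isIso_whiskerRight_of_isInvertedBy {W : MorphismProperty C} {L : C ⥤ D}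
    (hL : W.IsInvertedBy L) {F G : J ⥤ C} (τ : F ⟶ G) (hτ : ∀ j, W (τ.app j)) :
    IsIso (whiskerRight τ L) :=
  have : ∀ j, IsIso ((whiskerRight τ L).app j) := fun j => hL _ (hτ j)
  NatIso.isIso_of_isIso_app _

lemma isLocalizedEquivalence_of_unit_of_counit {W₁ : MorphismProperty C} {W₂ : MorphismProperty D}
    (Φ : LocalizerMorphism W₁ W₂) (Ψ : LocalizerMorphism W₂ W₁)
    (η : 𝟭 C ⟶ Φ.functor ⋙ Ψ.functor) (ε : Ψ.functor ⋙ Φ.functor ⟶ 𝟭 D)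
    (hη : ∀ A, W₁ (η.app A)) (hε : ∀ B, W₂ (ε.app B)) :
    Φ.IsLocalizedEquivalence where
  isEquivalence := by
    have := isIso_whiskerRight_of_isInvertedBy W₁.Q_inverts η hη
    have := isIso_whiskerRight_of_isInvertedBy W₂.Q_inverts ε hε
    refine Localization.isEquivalence W₁.Q W₁ W₂.Q W₂ (Φ.functor ⋙ W₂.Q)
      (Φ.localizedFunctor W₁.Q W₂.Q) (Ψ.functor ⋙ W₁.Q) (Ψ.localizedFunctor W₂.Q W₁.Q) ?_ ?_
    · calc
        (Φ.functor ⋙ W₂.Q) ⋙ Ψ.localizedFunctor W₂.Q W₁.Q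
          ≅ Φ.functor ⋙ W₂.Q ⋙ Ψ.localizedFunctor W₂.Q W₁.Q := Functor.associator _ _ _
        _ ≅ Φ.functor ⋙ Ψ.functor ⋙ W₁.Q :=
          isoWhiskerLeft _ (CatCommSq.iso Ψ.functor W₂.Q W₁.Q _).symm
        _ ≅ (Φ.functor ⋙ Ψ.functor) ⋙ W₁.Q := (Functor.associator _ _ _).symm
        _ ≅ 𝟭 C ⋙ W₁.Q := (asIso (whiskerRight η W₁.Q)).symm
        _ ≅ W₁.Q := leftUnitor _
    · calc
        (Ψ.functor ⋙ W₁.Q) ⋙ Φ.localizedFunctor W₁.Q W₂.Q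
          ≅ Ψ.functor ⋙ W₁.Q ⋙ Φ.localizedFunctor W₁.Q W₂.Q := Functor.associator _ _ _
        _ ≅ Ψ.functor ⋙ Φ.functor ⋙ W₂.Q :=
          isoWhiskerLeft _ (CatCommSq.iso Φ.functor W₁.Q W₂.Q _).symm
        _ ≅ (Ψ.functor ⋙ Φ.functor) ⋙ W₂.Q := (Functor.associator _ _ _).symm
        _ ≅ 𝟭 D ⋙ W₂.Q := asIso (whiskerRight ε W₂.Q)
        _ ≅ W₂.Q := leftUnitor _

end Localization

section InitialSegment

variable {m n : SimplexCategory}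

/-- The inclusion `[k] → [n]` of the initial segment of `[n]` with last vertex `k`. -/
def initialSegment (k : Fin (n.len + 1)) : ⦋k.val⦌ ⟶ n :=
  SimplexCategory.Hom.mk ⟨Fin.castLE k.isLt, (Fin.strictMono_castLE k.isLt).monotone⟩

lemma comp_initialSegment_last_le {k : Fin (n.len + 1)} (b : m ⟶ ⦋k.val⦌) :
    (b ≫ initialSegment k).toOrderHom (Fin.last _) ≤ k :=
  (initialSegment k).toOrderHom.monotone (Fin.le_last (b.toOrderHom (Fin.last _)))

/-- The factorization through `initialSegment k` of a map whose last value is at most `k`. -/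
def initialSegment.lift {k : Fin (n.len + 1)} (a : m ⟶ n)
    (ha : a.toOrderHom (Fin.last _) ≤ k) : m ⟶ ⦋k.val⦌ :=
  SimplexCategory.Hom.mk
    { toFun i := ⟨a.toOrderHom i,
        Nat.lt_succ_of_le ((a.toOrderHom.monotone (Fin.le_last i)).trans ha)⟩
      monotone' _ _ h := a.toOrderHom.monotone h }

lemma initialSegment.lift_fac {k : Fin (n.len + 1)} (a : m ⟶ n)
    (ha : a.toOrderHom (Fin.last _) ≤ k) : lift a ha ≫ initialSegment k = a := by
  ext : 3
  rfl

lemma initialSegment.lift_precomp {l : SimplexCategory} {k : Fin (n.len + 1)} (b : l ⟶ m)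
    (a : m ⟶ n) (ha : a.toOrderHom (Fin.last _) ≤ k) :
    lift (b ≫ a) ((a.toOrderHom.monotone (Fin.le_last _)).trans ha) = b ≫ lift a ha := by
  ext : 3
  rfl

lemma initialSegment.lift_comp_initialSegment {k : Fin (n.len + 1)} (b : m ⟶ ⦋k.val⦌) :
    lift (b ≫ initialSegment k) (comp_initialSegment_last_le b) = b := by
  ext : 3
  rfl

lemma initialSegment.map_lift_map (X : SSet.{u}) {k : Fin (n.len + 1)} (a : m ⟶ n)
    (ha : a.toOrderHom (Fin.last _) ≤ k) (x : X.obj (Opposite.op n)) :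
    X.map (lift a ha).op (X.map (initialSegment k).op x) = X.map a.op x := by
  rw [← Functor.map_comp_apply, ← op_comp, lift_fac]

lemma initialSegment_last (k : Fin (n.len + 1)) :
    (initialSegment k).toOrderHom (Fin.last _) = k :=
  rfl

end InitialSegment

namespace LaxPtOver

variable {X : SSet.{u}}

/-- The object `([k], x|[k])` of `Δ/X` associated with `([n], k, x)`. -/
def restrict (B : LaxPtOver X) : SplxOver X where
  obj := ⦋B.pt.val⦌
  simplex := X.map (initialSegment B.pt).op B.simplex

/-- The bijection exhibiting `B.restrict` as the value at `B` of a right adjoint of `ι_X`. -/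
def restrictHomEquiv (A : SplxOver X) (B : LaxPtOver X) :
    ((iotaOver X).obj A ⟶ B) ≃ (A ⟶ B.restrict) where
  toFun f :=
    { map := initialSegment.lift f.map (Hom.le f)
      fac := (initialSegment.map_lift_map X f.map (Hom.le f) B.simplex).trans f.fac }
  invFun g :=
    { map := g.map ≫ initialSegment B.pt
      le := comp_initialSegment_last_le g.map
      fac := (Functor.map_comp_apply X (initialSegment B.pt).op g.map.op B.simplex).trans g.fac }
  left_inv f := LaxPtOver.Hom.ext (initialSegment.lift_fac f.map (Hom.le f))
  right_inv g := SplxOver.Hom.ext (initialSegment.lift_comp_initialSegment g.map)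

lemma restrictHomEquiv_naturality_left {A A' : SplxOver X} {B : LaxPtOver X} (f : A' ⟶ A)
    (g : (iotaOver X).obj A ⟶ B) :
    restrictHomEquiv A' B ((iotaOver X).map f ≫ g) = f ≫ restrictHomEquiv A B g :=
  SplxOver.Hom.ext (initialSegment.lift_precomp f.map g.map (Hom.le g))

/-- The functor `(∗⫽Δ)/X ⥤ Δ/X`, `([n], k, x) ↦ ([k], x|[k])`. -/
def restriction (X : SSet.{u}) : LaxPtOver X ⥤ SplxOver X :=
  Adjunction.rightAdjointOfEquiv (F := iotaOver X) restrictHomEquiv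
    fun _ _ _ f g => restrictHomEquiv_naturality_left f g

/-- `ι_X` is left adjoint to restriction to initial segments. -/
def iotaOverAdjunction (X : SSet.{u}) : iotaOver X ⊣ restriction X :=
  Adjunction.adjunctionOfEquivRight _ _

end LaxPtOver

open LaxPtOver

lemma lastVertex_eq_inverseImage (X : SSet.{u}) :
    lastVertex X = (cocart X).inverseImage (iotaOver X) :=
  rfl

lemma cocart_eq_inverseImage (X : SSet.{u}) :
    cocart X = (lastVertex X).inverseImage (restriction X) := by
  ext A B f
  change f.map.toOrderHom A.pt = B.pt ↔
    ((restriction X).map f).map.toOrderHom (Fin.last _) = Fin.last _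
  rw [Fin.ext_iff, Fin.ext_iff]
  rfl

/-- `ι_X`, as a morphism of localizers from `lv` to `cc`. -/
def iotaOverLocalizerMorphism (X : SSet.{u}) : LocalizerMorphism (lastVertex X) (cocart X) :=
  .ofEq (lastVertex_eq_inverseImage X)

/-- Restriction to initial segments, as a morphism of localizers from `cc` to `lv`. -/
def restrictionLocalizerMorphism (X : SSet.{u}) :
    LocalizerMorphism (cocart X) (lastVertex X) :=
  .ofEq (cocart_eq_inverseImage X)

lemma lastVertex_iotaOverAdjunction_unit_app (X : SSet.{u}) (A : SplxOver X) :
    lastVertex X ((iotaOverAdjunction X).unit.app A) :=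
  rfl

lemma cocart_iotaOverAdjunction_counit_app (X : SSet.{u}) (B : LaxPtOver X) :
    cocart X ((iotaOverAdjunction X).counit.app B) :=
  initialSegment_last B.pt

instance isLocalizedEquivalence_iotaOverLocalizerMorphism (X : SSet.{u}) :
    (iotaOverLocalizerMorphism X).IsLocalizedEquivalence :=
  isLocalizedEquivalence_of_unit_of_counit _ (restrictionLocalizerMorphism X)
    (iotaOverAdjunction X).unit (iotaOverAdjunction X).counit
    (lastVertex_iotaOverAdjunction_unit_app X) (cocart_iotaOverAdjunction_counit_app X)

/-- for every simplicial set `X`, the functor `ι_X : Δ/X ⥤ (∗⫽Δ)/X`,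
`([n], x) ↦ ([n], n, x)`, sends last-vertex morphisms to cocartesian morphisms, and the
induced functor on localizations `(Δ/X)[lv⁻¹] ⥤ ((∗⫽Δ)/X)[cc⁻¹]` is an equivalence; i.e.
the composite of `ι_X` with the localization functor at `cc` exhibits `((∗⫽Δ)/X)[cc⁻¹]`
as the localization of `Δ/X` at `lv`. -/
theorem iotaOver_localization_equivalence (X : SSet.{u}) :
    (∀ ⦃A B : SplxOver X⦄ (f : A ⟶ B), lastVertex X f → cocart X ((iotaOver X).map f)) ∧
      (iotaOver X ⋙ (cocart X).Q).IsLocalization (lastVertex X) :=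
  ⟨(iotaOverLocalizerMorphism X).map,
    inferInstanceAs
      (((iotaOverLocalizerMorphism X).functor ⋙ (cocart X).Q).IsLocalization (lastVertex X))⟩
end

section
/- Let π : E ⥤ B be a discrete fibration, i.e. a functor such that for every object e of E and every morphism g : b → π(e) in B there exists a unique pair (e', φ : e' → e) with π(e') = b and π(φ) = g. Suppose B has an initial object b₀. Then the map sending an object e₀ of E with π(e₀) = b₀ to its connected component is a bijection from the set {objects e₀ of E with π(e₀) = b₀} (the fiber of π over b₀) to the set of connected components of E. -/
open CategoryTheory

/-- The set of connected components of a category: the quotient of its set of objects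
by the equivalence relation generated by the existence of a morphism. -/
def CatPi0 (C : Type*) [Category C] : Type _ :=
  Quot (fun a b : C => Nonempty (a ⟶ b))

/-! Since `b₀` is initial, the fiber over `b₀` contains exactly one object with an arrow to `e`:
the source of the lift of `b₀ ⟶ π.obj e`. Composing with a morphism `e ⟶ d` shows that `e` and `d`
share this object, so it depends only on the component of `e`; this gives the inverse map. -/

theorem bijective_quotMk_subtype_of_existsUnique_rel {α : Sort*} {r : α → α → Prop}
    [Std.Refl r] [IsTrans α r] {P : α → Prop} (h : ∀ a, ∃! a₀, P a₀ ∧ r a₀ a) :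
    Function.Bijective (fun a₀ : {a // P a} => Quot.mk r a₀.1) := by
  choose rep rep_spec rep_unique using h
  have rep_eq_of_rel (a b : α) (hab : r a b) : rep a = rep b :=
    rep_unique b _ ⟨(rep_spec a).1, _root_.trans (rep_spec a).2 hab⟩
  have rep_eq_self (a₀ : {a // P a}) : rep a₀ = a₀ :=
    (rep_unique a₀ _ ⟨a₀.2, refl a₀.1⟩).symm
  constructor
  · intro a₀ a₁ h_mk
    have h_rep : rep a₀ = rep a₁ := congrArg (Quot.lift rep rep_eq_of_rel) h_mk
    exact Subtype.ext (by rwa [rep_eq_self, rep_eq_self] at h_rep)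
  · rintro ⟨a⟩
    exact ⟨⟨rep a, (rep_spec a).1⟩, Quot.sound (rep_spec a).2⟩

section

variable {E B : Type*} [Category E] [Category B]

instance isPreorder_nonempty_hom : IsPreorder E (fun a b => Nonempty (a ⟶ b)) where
  refl a := ⟨𝟙 a⟩
  trans _ _ _ := fun ⟨f⟩ ⟨g⟩ => ⟨f ≫ g⟩

theorem existsUnique_fiber_nonempty_hom (π : E ⥤ B) {b₀ : B} {e : E}
    [Subsingleton (b₀ ⟶ π.obj e)] {g : b₀ ⟶ π.obj e}
    (h_lift : ∃! p : Σ e' : E, e' ⟶ e, ∃ h : π.obj p.1 = b₀, π.map p.2 = eqToHom h ≫ g) :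
    ∃! e₀ : E, π.obj e₀ = b₀ ∧ Nonempty (e₀ ⟶ e) := by
  obtain ⟨⟨e₀, φ⟩, ⟨he₀, -⟩, lift_unique⟩ := h_lift
  refine ⟨e₀, ⟨he₀, ⟨φ⟩⟩, ?_⟩
  rintro e₁ ⟨rfl, ⟨ψ⟩⟩
  have ψ_lifts : π.map ψ = eqToHom rfl ≫ g := Subsingleton.elim _ _
  exact congrArg Sigma.fst (lift_unique ⟨e₁, ψ⟩ ⟨rfl, ψ_lifts⟩)

theorem discreteFibration_fiber_pi0_bijective_general (π : E ⥤ B) (b₀ : B)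
    [∀ e, Unique (b₀ ⟶ π.obj e)]
    (h_lift : ∀ (e : E) (g : b₀ ⟶ π.obj e), ∃! p : Σ e' : E, e' ⟶ e,
      ∃ h : π.obj p.1 = b₀, π.map p.2 = eqToHom h ≫ g) :
    Function.Bijective (fun e₀ : {e : E // π.obj e = b₀} =>
      (Quot.mk (fun a b : E => Nonempty (a ⟶ b)) e₀.1 : CatPi0 E)) :=
  bijective_quotMk_subtype_of_existsUnique_rel fun e =>
    existsUnique_fiber_nonempty_hom π (h_lift e default)

end

/-- if `π : E ⥤ B` is a discrete fibration (every morphism `g : b ⟶ π(e)`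
admits a unique lift `(e', φ : e' ⟶ e)` with `π(e') = b` and `π(φ) = g`) and `B` has an
initial object `b₀`, then sending an object of the fiber of `π` over `b₀` to its connected
component is a bijection from the fiber onto the set of connected components of `E`. -/
theorem discreteFibration_fiber_pi0_bijective
    {E B : Type*} [Category E] [Category B] (π : E ⥤ B)
    (hπ : ∀ (e : E) (b : B) (g : b ⟶ π.obj e),
      ∃! p : Σ e' : E, e' ⟶ e,
        ∃ h : π.obj p.1 = b, π.map p.2 = eqToHom h ≫ g)
    (b₀ : B) (hb₀ : Limits.IsInitial b₀) :
    Function.Bijective (fun e₀ : {e : E // π.obj e = b₀} =>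
      (Quot.mk (fun a b : E => Nonempty (a ⟶ b)) e₀.1 : CatPi0 E)) :=
  have (e : E) : Unique (b₀ ⟶ π.obj e) := Limits.isInitialEquivUnique _ _ hb₀ (π.obj e)
  discreteFibration_fiber_pi0_bijective_general π b₀ fun e => hπ e b₀
end

section
/- Let X be a simplicial set, n ≥ 0, x ∈ X_n and y ∈ X₀. Let Z be the category whose objects are triples (([m], z), a, b) where ([m], z) is an object of Δ/X, a : ([n], x) → ([m], z) is any morphism of Δ/X, and b : ([0], y) → ([m], z) is a last-vertex morphism of Δ/X (i.e. the underlying map b : [0] → [m] satisfies b(0) = m and X(b)(z) = y); morphisms (([m], z), a, b) → (([m'], z'), a', b') are last-vertex morphisms w : ([m], z) → ([m'], z') with w ∘ a = a' and w ∘ b = b'. Then the map sending an element z ∈ X_{n+1} with X(d_{n+1})(z) = x and X(⟨n+1⟩)(z) = y (where d_{n+1} : [n] → [n+1] is the initial-segment inclusion and ⟨n+1⟩ : [0] → [n+1] picks the vertex n+1) to the connected component of (([n+1], z), d_{n+1}, ⟨n+1⟩) is a bijection from the set P_X(x, y) := {z ∈ X_{n+1} : X(d_{n+1})(z) = x and X(⟨n+1⟩)(z)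 = y} to the set of connected components of Z. -/
/-!
A map `a : [n] ⟶ [m]` extends uniquely along `d_{n+1}` to a map `â : [n+1] ⟶ [m]` preserving the
last vertex. By uniqueness, `a ↦ â` commutes with postcomposition by last-vertex maps, so the
simplex `X(â)(z)` attached to an object `(([m], z), a, b)` of `Z` depends only on its connected
component. For `a = d_{n+1}` the extension is the identity, which gives injectivity; and `â` is
itself a morphism of `Z` to the given object from the one attached to `X(â)(z)`, which gives
surjectivity.
-/

open CategoryTheory Simplicial

universe u

/-- An object of the category `Z`: a triple `(([m], z), a, b)` with `a : c ⟶ ([m], z)` an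
arbitrary morphism of `Δ/X` and `b : d ⟶ ([m], z)` a last-vertex morphism. -/
structure ZObj (X : SSet.{u}) (c d : SplxOver X) where
  mid : SplxOver X
  u : c ⟶ mid
  v : d ⟶ mid
  hv : lastVertex X v

/-- A morphism of `Z`: a last-vertex morphism `w` compatible with the legs. -/
@[ext]
structure ZHom {X : SSet.{u}} {c d : SplxOver X} (A B : ZObj X c d) where
  w : A.mid ⟶ B.mid
  hw : lastVertex X w
  hu : A.u ≫ w = B.u
  hv : A.v ≫ w = B.v

instance {X : SSet.{u}} {c d : SplxOver X} : Category (ZObj X c d) where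
  Hom := ZHom
  id A := ⟨𝟙 A.mid, rfl, Category.comp_id _, Category.comp_id _⟩
  comp := fun {A B C} (f : ZHom A B) (g : ZHom B C) =>
    ⟨f.w ≫ g.w,
      by
        have hf : (f.w).map.toOrderHom (Fin.last _) = Fin.last _ := f.hw
        have hg : (g.w).map.toOrderHom (Fin.last _) = Fin.last _ := g.hw
        show (g.w).map.toOrderHom ((f.w).map.toOrderHom (Fin.last _)) = Fin.last _
        rw [hf, hg],
      by rw [← Category.assoc, f.hu, g.hu], by rw [← Category.assoc, f.hv, g.hv]⟩
  id_comp := fun {A B} (f : ZHom A B) => by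
    apply ZHom.ext; exact Category.id_comp f.w
  comp_id := fun {A B} (f : ZHom A B) => by
    apply ZHom.ext; exact Category.comp_id f.w
  assoc f g h := by
    apply ZHom.ext; exact Category.assoc _ _ _

theorem CatPi0.bijective_mk {C S : Type*} [Category C] (s : S → C) (r : C → S)
    (map_eq : ∀ {A B : C}, (A ⟶ B) → r A = r B) (leftInverse : Function.LeftInverse r s)
    (counit : ∀ A, s (r A) ⟶ A) :
    Function.Bijective (fun z => (Quot.mk _ (s z) : CatPi0 C)) :=
  Function.bijective_iff_has_inverse.mpr
    ⟨Quot.lift r fun _ _ ⟨f⟩ => map_eq f, leftInverse, Quot.ind fun A => Quot.sound ⟨counit A⟩⟩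

theorem monotone_snoc {n : ℕ} {α : Type*} [Preorder α] {f : Fin n → α} {a : α}
    (hf : Monotone f) (ha : ∀ i, f i ≤ a) : Monotone (Fin.snoc (α := fun _ => α) f a) := by
  intro i j hij
  induction j using Fin.lastCases with
  | last =>
    induction i using Fin.lastCases with
    | last => exact le_rfl
    | cast i => simpa only [Fin.snoc_castSucc, Fin.snoc_last] using ha i
  | cast j =>
    induction i using Fin.lastCases with
    | last => exact absurd hij (Fin.castSucc_lt_last j).not_ge
    | cast i => simpa only [Fin.snoc_castSucc] using hf (Fin.castSucc_le_castSucc_iff.mp hij)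

theorem δ_last_apply {n : ℕ} (i : Fin (n + 1)) :
    (SimplexCategory.δ (Fin.last (n + 1))).toOrderHom i = i.castSucc :=
  Fin.succAbove_last_apply i

/-- The property of a map in `Δ` of preserving the last vertex. For a morphism `a` of `Δ/X`,
`lastVertex X a` is by definition `PreservesLast a.map`. -/
def PreservesLast {M N : SimplexCategory} (f : M ⟶ N) : Prop :=
  f.toOrderHom (Fin.last _) = Fin.last _

section ExtendLast

variable {n : ℕ} {M N : SimplexCategory}

theorem PreservesLast.id (M : SimplexCategory) : PreservesLast (𝟙 M) := rfl

theorem PreservesLast.const (M N : SimplexCategory) :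
    PreservesLast (SimplexCategory.const M N (Fin.last _)) := rfl

theorem PreservesLast.comp {L : SimplexCategory} {f : L ⟶ M} {g : M ⟶ N}
    (hf : PreservesLast f) (hg : PreservesLast g) : PreservesLast (f ≫ g) :=
  (congrArg g.toOrderHom hf).trans hg

theorem PreservesLast.hom_ext_zero {f g : ⦋0⦌ ⟶ M} (hf : PreservesLast f)
    (hg : PreservesLast g) : f = g := by
  have h : f.toOrderHom 0 = g.toOrderHom 0 := hf.trans hg.symm
  rw [SimplexCategory.eq_const_of_zero f, SimplexCategory.eq_const_of_zero g, h]

theorem PreservesLast.hom_ext_succ {f g : ⦋n + 1⦌ ⟶ M} (hf : PreservesLast f)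
    (hg : PreservesLast g)
    (h : SimplexCategory.δ (Fin.last (n + 1)) ≫ f = SimplexCategory.δ (Fin.last (n + 1)) ≫ g) :
    f = g := by
  refine ConcreteCategory.hom_ext _ _ fun i => ?_
  induction i using Fin.lastCases with
  | last => exact hf.trans hg.symm
  | cast i =>
    have hi : f.toOrderHom ((SimplexCategory.δ (Fin.last (n + 1))).toOrderHom i) =
        g.toOrderHom ((SimplexCategory.δ (Fin.last (n + 1))).toOrderHom i) :=
      ConcreteCategory.congr_hom h i
    rwa [δ_last_apply] at hi

/-- The extension of `a : [n] ⟶ M` to `[n+1]` that sends the vertex `n+1` to the last vertex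
of `M`. -/
def extendLast (a : ⦋n⦌ ⟶ M) : ⦋n + 1⦌ ⟶ M :=
  SimplexCategory.Hom.mk
    { toFun := Fin.snoc (α := fun _ => Fin (M.len + 1)) a.toOrderHom (Fin.last _)
      monotone' := monotone_snoc a.toOrderHom.monotone fun _ => Fin.le_last _ }

theorem preservesLast_extendLast (a : ⦋n⦌ ⟶ M) : PreservesLast (extendLast a) :=
  Fin.snoc_last (α := fun _ => Fin (M.len + 1)) _ _

theorem δ_last_comp_extendLast (a : ⦋n⦌ ⟶ M) :
    SimplexCategory.δ (Fin.last (n + 1)) ≫ extendLast a = a := by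
  refine ConcreteCategory.hom_ext _ _ fun i => ?_
  change (extendLast a).toOrderHom ((SimplexCategory.δ (Fin.last (n + 1))).toOrderHom i) =
    a.toOrderHom i
  rw [δ_last_apply]
  exact Fin.snoc_castSucc (α := fun _ => Fin (M.len + 1)) _ _ _

theorem const_last_comp_extendLast (a : ⦋n⦌ ⟶ M) {b : ⦋0⦌ ⟶ M} (hb : PreservesLast b) :
    SimplexCategory.const ⦋0⦌ ⦋n + 1⦌ (Fin.last (n + 1)) ≫ extendLast a = b :=
  ((PreservesLast.const _ _).comp (preservesLast_extendLast a)).hom_ext_zero hb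

theorem extendLast_comp (a : ⦋n⦌ ⟶ M) {w : M ⟶ N} (hw : PreservesLast w) :
    extendLast a ≫ w = extendLast (a ≫ w) :=
  ((preservesLast_extendLast a).comp hw).hom_ext_succ (preservesLast_extendLast _) <| by
    rw [← Category.assoc, δ_last_comp_extendLast, δ_last_comp_extendLast]

theorem extendLast_δ_last : extendLast (SimplexCategory.δ (Fin.last (n + 1))) = 𝟙 ⦋n + 1⦌ :=
  (preservesLast_extendLast _).hom_ext_succ (PreservesLast.id _) <| by
    rw [δ_last_comp_extendLast, Category.comp_id]

end ExtendLast

section ConeSimplex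

variable {X : SSet.{u}} {n : ℕ} {x : X _⦋n⦌} {y : X _⦋0⦌}

/-- The set `P_X(x, y)`, whose elements are regarded as cones over `x` with apex `y`: simplices of
dimension `n + 1` with last face `x` and last vertex `y`. -/
abbrev ConeSimplex (x : X _⦋n⦌) (y : X _⦋0⦌) : Type u :=
  {z : X _⦋n + 1⦌ //
    X.map (SimplexCategory.δ (Fin.last (n + 1))).op z = x ∧
    X.map (SimplexCategory.const ⦋0⦌ ⦋n + 1⦌ (Fin.last (n + 1))).op z = y}

/-- The object `(([n+1], z), d_{n+1}, ⟨n+1⟩)` of `Z` attached to `z ∈ P_X(x, y)`. -/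
def ConeSimplex.toZObj (z : ConeSimplex x y) : ZObj X ⟨⦋n⦌, x⟩ ⟨⦋0⦌, y⟩ where
  mid := ⟨⦋n + 1⦌, z.1⟩
  u := ⟨SimplexCategory.δ (Fin.last (n + 1)), z.2.1⟩
  v := ⟨SimplexCategory.const ⦋0⦌ ⦋n + 1⦌ (Fin.last (n + 1)), z.2.2⟩
  hv := PreservesLast.const _ _

namespace ZObj

/-- The element of `P_X(x, y)` attached to an object `(([m], z), a, b)` of `Z`: the pullback of `z`
along the extension of `a` to `[n+1]` by the last vertex. -/
def toConeSimplex (A : ZObj X ⟨⦋n⦌, x⟩ ⟨⦋0⦌, y⟩) : ConeSimplex x y where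
  val := X.map (extendLast A.u.map).op A.mid.simplex
  property := by
    rw [← Functor.map_comp_apply, ← Functor.map_comp_apply, ← op_comp, ← op_comp,
      δ_last_comp_extendLast, const_last_comp_extendLast _ A.hv]
    exact ⟨A.u.fac, A.v.fac⟩

theorem toConeSimplex_eq_of_hom {A B : ZObj X ⟨⦋n⦌, x⟩ ⟨⦋0⦌, y⟩} (f : A ⟶ B) :
    A.toConeSimplex = B.toConeSimplex := by
  have hu : A.u.map ≫ f.w.map = B.u.map := congrArg SplxOver.Hom.map f.hu
  apply Subtype.ext
  calc X.map (extendLast A.u.map).op A.mid.simplex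
      = X.map (extendLast A.u.map).op (X.map f.w.map.op B.mid.simplex) := by rw [f.w.fac]
    _ = X.map (extendLast A.u.map ≫ f.w.map).op B.mid.simplex := by
      rw [op_comp, Functor.map_comp_apply]
    _ = X.map (extendLast B.u.map).op B.mid.simplex := by rw [extendLast_comp _ f.hw, hu]

theorem toConeSimplex_toZObj (z : ConeSimplex x y) : z.toZObj.toConeSimplex = z := by
  apply Subtype.ext
  change X.map (extendLast (SimplexCategory.δ (Fin.last (n + 1)))).op z.1 = z.1
  rw [extendLast_δ_last, op_id, Functor.map_id_apply]

/-- The canonical morphism of `Z` to `(([m], z), a, b)` from the object attached to its element of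
`P_X(x, y)`, given by the extension of `a` to `[n+1]` by the last vertex. -/
def fromToConeSimplex (A : ZObj X ⟨⦋n⦌, x⟩ ⟨⦋0⦌, y⟩) : A.toConeSimplex.toZObj ⟶ A where
  w := ⟨extendLast A.u.map, rfl⟩
  hw := preservesLast_extendLast A.u.map
  hu := SplxOver.Hom.ext (δ_last_comp_extendLast A.u.map)
  hv := SplxOver.Hom.ext (const_last_comp_extendLast A.u.map A.hv)

end ZObj

end ConeSimplex

/-- for a simplicial set `X`, `x ∈ X_n` and `y ∈ X₀`, the map sending
`z ∈ P_X(x,y) = {z ∈ X_{n+1} : X(d_{n+1})(z) = x, X(⟨n+1⟩)(z) = y}` to the connected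
component of `(([n+1], z), d_{n+1}, ⟨n+1⟩)` is a bijection onto the set of connected
components of the category `Z`. -/
theorem pXxy_bijective_pi0 (X : SSet.{u}) (n : ℕ)
    (x : X.obj (Opposite.op (SimplexCategory.mk n)))
    (y : X.obj (Opposite.op (SimplexCategory.mk 0))) :
    Function.Bijective
      (fun z : {z : X.obj (Opposite.op (SimplexCategory.mk (n + 1))) //
          X.map (SimplexCategory.δ (Fin.last (n + 1))).op z = x ∧
          X.map (SimplexCategory.const (SimplexCategory.mk 0) (SimplexCategory.mk (n + 1))
            (Fin.last (n + 1))).op z = y} =>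
        (Quot.mk _
          (⟨⟨SimplexCategory.mk (n + 1), z.1⟩,
            SplxOver.Hom.mk (SimplexCategory.δ (Fin.last (n + 1))) z.2.1,
            SplxOver.Hom.mk (SimplexCategory.const (SimplexCategory.mk 0)
              (SimplexCategory.mk (n + 1)) (Fin.last (n + 1))) z.2.2,
            rfl⟩ : ZObj X ⟨SimplexCategory.mk n, x⟩ ⟨SimplexCategory.mk 0, y⟩) :
          CatPi0 (ZObj X ⟨SimplexCategory.mk n, x⟩ ⟨SimplexCategory.mk 0, y⟩))) :=
  CatPi0.bijective_mk ConeSimplex.toZObj ZObj.toConeSimplex ZObj.toConeSimplex_eq_of_hom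
    ZObj.toConeSimplex_toZObj ZObj.fromToConeSimplex
end

section
/- Let X be a strict Segal simplicial set, let x, y ∈ X₀, and let p : Δ/X → (Δ/X)[lv⁻¹] be the localization functor at the last-vertex morphisms. For f ∈ X₁ with d₁(f) = x and d₀(f) = y, consider the morphism u_f : ([0], x) → ([1], f) of Δ/X given by the map [0] → [1], 0 ↦ 0, and the last-vertex morphism v_f : ([0], y) → ([1], f) given by 0 ↦ 1. Then the map {f ∈ X₁ : d₁(f) = x, d₀(f) = y} → Hom_{(Δ/X)[lv⁻¹]}(p([0], x), p([0], y)), f ↦ p(v_f)⁻¹ ∘ p(u_f), is a bijection. -/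
open CategoryTheory Simplicial

universe u

lemma delta_zero_lastVertex :
    (SimplexCategory.δ (0 : Fin 2)).toOrderHom (Fin.last 0) = Fin.last 1 := by
  decide

/-!
For an arbitrary simplicial set `X`, the localization of `Δ/X` at the last-vertex morphisms is
equivalent to the homotopy category of `X`: sending a simplex to its last vertex is a functor one
way, and sending an edge `f` to the fraction `p(v_f)⁻¹ ∘ p(u_f)` is a functor the other way. They
are inverse to each other because a simplex becomes isomorphic to its last vertex in the
localization, and because the edges of a simplex are the fractions of the inclusions of their ends.
When `X` is strict Segal, its edges compose uniquely and associatively, so that every morphism of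
the homotopy category is the class of exactly one edge.
-/

lemma map_map_of_comp_eq {X : SSet.{u}} {k l m : SimplexCategory} {a : k ⟶ l} {b : l ⟶ m}
    {c : k ⟶ m} (h : a ≫ b = c) (s : X.obj (Opposite.op m)) :
    X.map a.op (X.map b.op s) = X.map c.op s := by
  rw [← h, op_comp, Functor.map_comp_apply]

namespace SplxOver

variable {X : SSet.{u}} {A B : SplxOver X} {x y z : X _⦋0⦌}

lemma hom_ext {a b : A ⟶ B} (h : a.map = b.map) : a = b :=
  Hom.ext h

/-- The object `([0], x)` of `Δ/X`. A vertex of a simplex `B` lying over `x` is then the same thing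
as a morphism `point x ⟶ B`. -/
abbrev point (x : X _⦋0⦌) : SplxOver X := ⟨⦋0⦌, x⟩

/-- The position in `B` of a vertex `u` of `B`. -/
def position (u : point x ⟶ B) : Fin (B.obj.len + 1) :=
  u.map.toOrderHom 0

lemma vertex_ext {u v : point x ⟶ B} (h : position u = position v) : u = v :=
  hom_ext (SimplexCategory.Hom.ext_zero_left _ _ h)

lemma position_comp_le (a : A ⟶ B) {u : point x ⟶ A} {v : point y ⟶ A}
    (h : position u ≤ position v) : position (u ≫ a) ≤ position (v ≫ a) :=
  a.map.toOrderHom.monotone h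

/-- The edge of `X` cut out of a simplex `B` by two of its vertices. -/
def edge (u : point x ⟶ B) (v : point y ⟶ B) (h : position u ≤ position v) : X.Edge x y :=
  .mk (X.map (SimplexCategory.mkOfLe (n := B.obj.len) (position u) (position v) h).op B.simplex)
    ((map_map_of_comp_eq (SimplexCategory.Hom.ext_zero_left _ u.map rfl) _).trans u.fac)
    ((map_map_of_comp_eq (SimplexCategory.Hom.ext_zero_left _ v.map rfl) _).trans v.fac)

/-- The object `([1], e)` of `Δ/X`. -/
abbrev ofEdge (e : X.Edge x y) : SplxOver X := ⟨⦋1⦌, e.edge⟩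

/-- The vertex `0` of `e`; it is the morphism `u_e` of the informal statement. -/
def source (e : X.Edge x y) : point x ⟶ ofEdge e :=
  Hom.mk (SimplexCategory.δ (1 : Fin 2)) e.src_eq

/-- The vertex `1` of `e`; it is the morphism `v_e` of the informal statement. -/
def target (e : X.Edge x y) : point y ⟶ ofEdge e :=
  Hom.mk (SimplexCategory.δ (0 : Fin 2)) e.tgt_eq

lemma lastVertex_target (e : X.Edge x y) : lastVertex X (target e) :=
  delta_zero_lastVertex

lemma source_le_target (e : X.Edge x y) : position (source e) ≤ position (target e) :=
  show (0 : Fin 2) ≤ 1 from Fin.zero_le 1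

/-- The inclusion in `B` of the edge cut out by two of its vertices. -/
def edgeInclusion (u : point x ⟶ B) (v : point y ⟶ B) (h : position u ≤ position v) :
    ofEdge (edge u v h) ⟶ B :=
  Hom.mk (SimplexCategory.mkOfLe (n := B.obj.len) _ _ h) rfl

@[simp]
lemma source_edgeInclusion (u : point x ⟶ B) (v : point y ⟶ B) (h : position u ≤ position v) :
    source (edge u v h) ≫ edgeInclusion u v h = u :=
  vertex_ext rfl

@[simp]
lemma target_edgeInclusion (u : point x ⟶ B) (v : point y ⟶ B) (h : position u ≤ position v) :
    target (edge u v h) ≫ edgeInclusion u v h = v :=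
  vertex_ext rfl

lemma edge_source_target (e : X.Edge x y) :
    edge (source e) (target e) (source_le_target e) = e := by
  have mkOfLe_eq_id : SimplexCategory.mkOfLe (n := 1) 0 1 (Fin.zero_le _) = 𝟙 _ :=
    SimplexCategory.Hom.ext_one_left _ _
  refine SSet.Edge.ext (Eq.trans (b := X.map (𝟙 ⦋1⦌).op e.edge) ?_ (by simp))
  exact congr_arg (fun a => X.map a.op e.edge) mkOfLe_eq_id

lemma edge_comp (u : point x ⟶ A) (v : point y ⟶ A) (h : position u ≤ position v) (a : A ⟶ B) :
    edge (u ≫ a) (v ≫ a) (position_comp_le a h) = edge u v h :=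
  SSet.Edge.ext <| (map_map_of_comp_eq (SimplexCategory.Hom.ext_one_left _ _) _).symm.trans
    (congr_arg _ a.fac)

lemma edge_self (u : point x ⟶ B) : edge u u le_rfl = .id x :=
  SSet.Edge.ext <| (map_map_of_comp_eq (SimplexCategory.Hom.ext_one_left _ _) _).symm.trans
    (congr_arg (X.map (SimplexCategory.σ 0).op) u.fac)

/-- The triangle of `X` cut out of a simplex `B` by three of its vertices. -/
def triangle (u : point x ⟶ B) (v : point y ⟶ B) (w : point z ⟶ B)
    (huv : position u ≤ position v) (hvw : position v ≤ position w) :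
    (edge u v huv).CompStruct (edge v w hvw) (edge u w (huv.trans hvw)) :=
  .mk (X.map (SimplexCategory.mkOfLeComp (n := B.obj.len) _ _ _ huv hvw).op B.simplex)
    (map_map_of_comp_eq (SimplexCategory.Hom.ext_one_left _ _) _)
    (map_map_of_comp_eq (SimplexCategory.Hom.ext_one_left _ _) _)
    (map_map_of_comp_eq (SimplexCategory.Hom.ext_one_left _ _) _)

variable (X) in
/-- The homotopy category of a simplicial set, which only depends on its simplices of dimension at
most two. -/
abbrev HoCat : Type u := ((SSet.truncation 2).obj X).HomotopyCategory

/-- A vertex of `X` as an object of the homotopy category. -/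
def HoCat.mk (x : X _⦋0⦌) : HoCat X :=
  SSet.Truncated.HomotopyCategory.mk x

/-- The class of an edge of `X` in the homotopy category. -/
def HoCat.homMk (e : X.Edge x y) : HoCat.mk x ⟶ HoCat.mk y :=
  SSet.Truncated.HomotopyCategory.homMk e.toTruncated

open HoCat

@[simp]
lemma HoCat.homMk_id (x : X _⦋0⦌) : homMk (.id x) = 𝟙 (HoCat.mk x) :=
  SSet.Truncated.HomotopyCategory.homMk_id (V := (SSet.truncation 2).obj X) x

lemma HoCat.homMk_comp_homMk {e₀₁ : X.Edge x y} {e₁₂ : X.Edge y z} {e₀₂ : X.Edge x z}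
    (t : e₀₁.CompStruct e₁₂ e₀₂) : homMk e₀₁ ≫ homMk e₁₂ = homMk e₀₂ :=
  SSet.Truncated.HomotopyCategory.homMk_comp_homMk t.toTruncated

lemma homMk_edge_comp (u : point x ⟶ B) (v : point y ⟶ B) (w : point z ⟶ B)
    (huv : position u ≤ position v) (hvw : position v ≤ position w) :
    homMk (edge u v huv) ≫ homMk (edge v w hvw) = homMk (edge u w (huv.trans hvw)) :=
  homMk_comp_homMk (triangle u v w huv hvw)

lemma homMk_edge_self (u : point x ⟶ B) : homMk (edge u u le_rfl) = 𝟙 _ := by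
  rw [edge_self, homMk_id]

/-- The isomorphism between two vertices of `X` that occupy the same position in a simplex. -/
def vertexIso (u : point x ⟶ B) (v : point y ⟶ B) (h : position u = position v) :
    HoCat.mk x ≅ HoCat.mk y where
  hom := homMk (edge u v h.le)
  inv := homMk (edge v u h.ge)
  hom_inv_id := by rw [homMk_edge_comp, homMk_edge_self]
  inv_hom_id := by rw [homMk_edge_comp, homMk_edge_self]

/-- The value of `X` at the last vertex of the simplex `A`. -/
def lastPoint (A : SplxOver X) : X _⦋0⦌ :=
  X.map (SimplexCategory.const ⦋0⦌ A.obj (Fin.last _)).op A.simplex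

/-- The last vertex of the simplex `A`. -/
def lastInclusion (A : SplxOver X) : point (lastPoint A) ⟶ A :=
  Hom.mk (SimplexCategory.const ⦋0⦌ A.obj (Fin.last _)) rfl

lemma lastVertex_lastInclusion (A : SplxOver X) : lastVertex X (lastInclusion A) :=
  rfl

lemma position_le_last (u : point x ⟶ A) : position u ≤ position (lastInclusion A) :=
  Fin.le_last _

variable (X) in
/-- The last-vertex functor from `Δ/X` to the homotopy category of `X`: a morphism `a : A ⟶ B` is
sent to the edge of `B` from the image under `a` of the last vertex of `A` to the last vertex
of `B`. -/
@[simps]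
def lastVertexFunctor : SplxOver X ⥤ HoCat X where
  obj A := HoCat.mk (lastPoint A)
  map {A B} a := homMk (edge (lastInclusion A ≫ a) (lastInclusion B) (position_le_last _))
  map_id A := by
    simp only [Category.comp_id]
    exact homMk_edge_self _
  map_comp {A B C} a b := by
    rw [← edge_comp _ _ (position_le_last (lastInclusion A ≫ a)) b, homMk_edge_comp]
    simp only [Category.assoc]

lemma lastVertex_isInvertedBy_lastVertexFunctor :
    (lastVertex X).IsInvertedBy (lastVertexFunctor X) :=
  fun _ _ a ha => (vertexIso (lastInclusion _ ≫ a) (lastInclusion _) ha).isIso_hom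

/-- The class of the edge from a vertex of `B` to the last vertex of `B`. -/
def toLast (u : point x ⟶ B) : HoCat.mk x ⟶ (lastVertexFunctor X).obj B :=
  homMk (edge u (lastInclusion B) (position_le_last u))

lemma toLast_comp_map (u : point x ⟶ A) (a : A ⟶ B) :
    toLast u ≫ (lastVertexFunctor X).map a = toLast (u ≫ a) := by
  rw [toLast, ← edge_comp _ _ _ a]
  exact homMk_edge_comp _ _ _ _ _

lemma homMk_comp_toLast (e : X.Edge x y) : homMk e ≫ toLast (target e) = toLast (source e) :=
  (congr_arg (homMk · ≫ toLast (target e)) (edge_source_target e).symm).trans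
    (homMk_edge_comp _ _ _ _ _)

/-- In the homotopy category, a vertex `x` is isomorphic to the last vertex of `([0], x)`. -/
def pointIso (x : X _⦋0⦌) : HoCat.mk x ≅ (lastVertexFunctor X).obj (point x) :=
  vertexIso (𝟙 (point x)) (lastInclusion (point x)) rfl

lemma pointIso_hom_comp_map (u : point x ⟶ B) :
    (pointIso x).hom ≫ (lastVertexFunctor X).map u = toLast u :=
  (toLast_comp_map (𝟙 _) u).trans (by rw [Category.id_comp])

/-- The fraction `p(v_e)⁻¹ ∘ p(u_e)` of an edge `e`. -/
noncomputable def fraction (e : X.Edge x y) :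
    (lastVertex X).Q.obj (point x) ⟶ (lastVertex X).Q.obj (point y) :=
  (lastVertex X).Q.map (source e) ≫
    (Localization.isoOfHom (lastVertex X).Q (lastVertex X) (target e) (lastVertex_target e)).inv

lemma isIso_Q_map {a : A ⟶ B} (ha : lastVertex X a) : IsIso ((lastVertex X).Q.map a) :=
  Localization.inverts (lastVertex X).Q (lastVertex X) a ha

@[simp]
lemma fraction_comp_map_target (e : X.Edge x y) :
    fraction e ≫ (lastVertex X).Q.map (target e) = (lastVertex X).Q.map (source e) := by
  simp [fraction]

lemma fraction_comp_map (e : X.Edge x y) (a : ofEdge e ⟶ B) :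
    fraction e ≫ (lastVertex X).Q.map (target e ≫ a) = (lastVertex X).Q.map (source e ≫ a) := by
  rw [Functor.map_comp, Functor.map_comp, ← Category.assoc, fraction_comp_map_target]

lemma fraction_edge_comp_map (u : point x ⟶ B) (v : point y ⟶ B) (h : position u ≤ position v) :
    fraction (edge u v h) ≫ (lastVertex X).Q.map v = (lastVertex X).Q.map u := by
  simpa using fraction_comp_map (edge u v h) (edgeInclusion u v h)

lemma fraction_id (x : X _⦋0⦌) : fraction (SSet.Edge.id x) = 𝟙 _ := by
  simpa [edge_self] using fraction_edge_comp_map (𝟙 (point x)) (𝟙 _) le_rfl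

lemma fraction_comp_fraction {e₀₁ : X.Edge x y} {e₁₂ : X.Edge y z} {e₀₂ : X.Edge x z}
    (t : e₀₁.CompStruct e₁₂ e₀₂) : fraction e₀₁ ≫ fraction e₁₂ = fraction e₀₂ := by
  let T : SplxOver X := ⟨⦋2⦌, t.simplex⟩
  let d₂ : ofEdge e₀₁ ⟶ T := Hom.mk (SimplexCategory.δ 2) t.d₂
  let d₀ : ofEdge e₁₂ ⟶ T := Hom.mk (SimplexCategory.δ 0) t.d₀
  let d₁ : ofEdge e₀₂ ⟶ T := Hom.mk (SimplexCategory.δ 1) t.d₁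
  have vertex₀ : source e₀₁ ≫ d₂ = source e₀₂ ≫ d₁ := vertex_ext rfl
  have vertex₁ : target e₀₁ ≫ d₂ = source e₁₂ ≫ d₀ := vertex_ext rfl
  have vertex₂ : target e₁₂ ≫ d₀ = target e₀₂ ≫ d₁ := vertex_ext rfl
  have : IsIso ((lastVertex X).Q.map (target e₁₂ ≫ d₀)) := isIso_Q_map rfl
  rw [← cancel_mono ((lastVertex X).Q.map (target e₁₂ ≫ d₀)), Category.assoc, fraction_comp_map,
    ← vertex₁, fraction_comp_map, vertex₀, vertex₂, fraction_comp_map]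

variable (X) in
/-- The functor from the homotopy category of `X` to the localization of `Δ/X` sending an edge to
its fraction. -/
noncomputable def fractionFunctor : HoCat X ⥤ (lastVertex X).Localization :=
  SSet.Truncated.HomotopyCategory.lift (fun x => (lastVertex X).Q.obj (point x))
    (fun e => fraction e) fraction_id fraction_comp_fraction

lemma fractionFunctor_map_homMk (e : X.Edge x y) :
    (fractionFunctor X).map (homMk e) = fraction e :=
  SSet.Truncated.HomotopyCategory.lift_map_homMk ..

lemma fractionFunctor_map_lastVertexFunctor_map_comp (a : A ⟶ B) :
    (fractionFunctor X).map ((lastVertexFunctor X).map a) ≫ (lastVertex X).Q.map (lastInclusion B) =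
      (lastVertex X).Q.map (lastInclusion A) ≫ (lastVertex X).Q.map a :=
  (congr_arg (· ≫ (lastVertex X).Q.map (lastInclusion B)) (fractionFunctor_map_homMk _)).trans
    ((fraction_edge_comp_map _ _ _).trans (Functor.map_comp _ _ _))

variable (X) in
/-- The components are the images of the inclusions of the last vertices, which are inverted. -/
noncomputable def lastVertexFunctorCompFractionFunctor :
    lastVertexFunctor X ⋙ fractionFunctor X ≅ (lastVertex X).Q :=
  NatIso.ofComponents
    (fun A => Localization.isoOfHom (lastVertex X).Q (lastVertex X) (lastInclusion A)
      (lastVertex_lastInclusion A))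
    fractionFunctor_map_lastVertexFunctor_map_comp

variable (X) in
/-- The functor out of the localization of `Δ/X` induced by the last-vertex functor. -/
noncomputable def localizedLastVertexFunctor : (lastVertex X).Localization ⥤ HoCat X :=
  Localization.lift (lastVertexFunctor X) lastVertex_isInvertedBy_lastVertexFunctor
    (lastVertex X).Q

variable (X) in
/-- The isomorphism exhibiting `localizedLastVertexFunctor` as a factorization of the last-vertex
functor. -/
noncomputable def qCompLocalizedLastVertexFunctor :
    (lastVertex X).Q ⋙ localizedLastVertexFunctor X ≅ lastVertexFunctor X :=
  Localization.fac ..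

variable (X) in
/-- The counit of `hoCatEquivLocalization`; it is enough to define it after precomposing with the
localization functor. -/
noncomputable def localizedLastVertexFunctorCompFractionFunctor :
    localizedLastVertexFunctor X ⋙ fractionFunctor X ≅ 𝟭 _ :=
  Localization.liftNatIso (lastVertex X).Q (lastVertex X)
    ((lastVertex X).Q ⋙ localizedLastVertexFunctor X ⋙ fractionFunctor X) (lastVertex X).Q _ _
    (Functor.isoWhiskerRight (qCompLocalizedLastVertexFunctor X) (fractionFunctor X) ≪≫
      lastVertexFunctorCompFractionFunctor X)

/-- The component at the vertex `x` of the unit of `hoCatEquivLocalization`. -/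
noncomputable def objMkIso (x : X _⦋0⦌) :
    HoCat.mk x ≅ (localizedLastVertexFunctor X).obj ((lastVertex X).Q.obj (point x)) :=
  pointIso x ≪≫ (qCompLocalizedLastVertexFunctor X).symm.app (point x)

lemma objMkIso_hom_comp_map (u : point x ⟶ B) :
    (objMkIso x).hom ≫ (localizedLastVertexFunctor X).map ((lastVertex X).Q.map u) =
      toLast u ≫ (qCompLocalizedLastVertexFunctor X).inv.app B := by
  rw [← pointIso_hom_comp_map, Category.assoc]
  simp only [objMkIso, Iso.trans_hom, Category.assoc, Iso.app_hom, Iso.symm_hom,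
    NatTrans.naturality, ← Functor.comp_map]

lemma objMkIso_naturality (e : X.Edge x y) :
    homMk e ≫ (objMkIso y).hom =
      (objMkIso x).hom ≫ (localizedLastVertexFunctor X).map (fraction e) := by
  have := isIso_Q_map (lastVertex_target e)
  rw [← cancel_mono ((localizedLastVertexFunctor X).map ((lastVertex X).Q.map (target e)))]
  calc
    (homMk e ≫ (objMkIso y).hom) ≫
          (localizedLastVertexFunctor X).map ((lastVertex X).Q.map (target e))
      = homMk e ≫ toLast (target e) ≫ (qCompLocalizedLastVertexFunctor X).inv.app _ := by
      rw [Category.assoc, objMkIso_hom_comp_map]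
    _ = toLast (source e) ≫ (qCompLocalizedLastVertexFunctor X).inv.app _ := by
      rw [← homMk_comp_toLast, Category.assoc]
    _ = ((objMkIso x).hom ≫ (localizedLastVertexFunctor X).map (fraction e)) ≫
          (localizedLastVertexFunctor X).map ((lastVertex X).Q.map (target e)) := by
      rw [Category.assoc, ← Functor.map_comp, fraction_comp_map_target, objMkIso_hom_comp_map]

variable (X) in
/-- The unit of `hoCatEquivLocalization`. -/
noncomputable def fractionFunctorCompLocalizedLastVertexFunctor :
    𝟭 _ ≅ fractionFunctor X ⋙ localizedLastVertexFunctor X :=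
  SSet.Truncated.HomotopyCategory.mkNatIso objMkIso
    (fun _ _ e => (objMkIso_naturality e).trans <|
      congr_arg (fun f => _ ≫ (localizedLastVertexFunctor X).map f)
        (fractionFunctor_map_homMk e).symm)

variable (X) in
/-- The localization of `Δ/X` at the last-vertex morphisms is the homotopy category of `X`, for
every simplicial set `X`. -/
noncomputable def hoCatEquivLocalization : HoCat X ≌ (lastVertex X).Localization :=
  .mk (fractionFunctor X) (localizedLastVertexFunctor X)
    (fractionFunctorCompLocalizedLastVertexFunctor X)
    (localizedLastVertexFunctorCompFractionFunctor X)

lemma exists_edge_eq_of_surjective_spine {n : ℕ} (hn : Function.Surjective (X.spine n))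
    {p : Fin (n + 1) → X _⦋0⦌} (e : ∀ i : Fin n, X.Edge (p i.castSucc) (p i.succ)) :
    ∃ (s : X _⦋n⦌) (v : ∀ i, point (p i) ⟶ (⟨⦋n⦌, s⟩ : SplxOver X))
      (hv : ∀ i j, i ≤ j → position (v i) ≤ position (v j)),
      ∀ i, edge (v i.castSucc) (v i.succ) (hv _ _ i.castSucc_le_succ) = e i := by
  obtain ⟨s, hs⟩ := hn ⟨p, fun i => (e i).edge, fun i => (e i).src_eq, fun i => (e i).tgt_eq⟩
  refine ⟨s, fun i => ⟨SimplexCategory.const ⦋0⦌ ⦋n⦌ i, ?_⟩, fun _ _ h => h, fun i => ?_⟩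
  · exact (X.spine_vertex n s i).symm.trans (congr_arg (fun q => q.vertex i) hs)
  · exact SSet.Edge.ext ((X.spine_arrow n s i).symm.trans (congr_arg (fun q => q.arrow i) hs))

lemma exists_compStruct (h₂ : Function.Surjective (X.spine 2)) (e : X.Edge x y) (f : X.Edge y z) :
    ∃ g : X.Edge x z, Nonempty (e.CompStruct f g) := by
  obtain ⟨s, v, hv, hedge⟩ := exists_edge_eq_of_surjective_spine h₂ (p := ![x, y, z])
    (Fin.cons e (Fin.cons f finZeroElim))
  obtain rfl : edge (v 0) (v 1) (hv 0 1 (by decide)) = e := hedge 0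
  obtain rfl : edge (v 1) (v 2) (hv 1 2 (by decide)) = f := hedge 1
  exact ⟨_, ⟨triangle (v 0) (v 1) (v 2) _ _⟩⟩

lemma compStruct_unique (h₂ : Function.Injective (X.spine 2)) {e : X.Edge x y} {f : X.Edge y z}
    {g g' : X.Edge x z} (t : e.CompStruct f g) (t' : e.CompStruct f g') : g = g' := by
  have simplex_eq : t.simplex = t'.simplex := h₂ <| SSet.Path.ext' fun i => by
    rw [SSet.spine_arrow, SSet.spine_arrow]
    match i with
    | 0 =>
      rw [SimplexCategory.mkOfSucc_zero_eq_δ]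
      exact t.d₂.trans t'.d₂.symm
    | 1 =>
      rw [SimplexCategory.mkOfSucc_one_eq_δ]
      exact t.d₀.trans t'.d₀.symm
  exact SSet.Edge.ext (by rw [← t.d₁, ← t'.d₁, simplex_eq])

lemma exists_compStruct_assoc (h₃ : Function.Surjective (X.spine 3)) {w : X _⦋0⦌}
    (e : X.Edge w x) (f : X.Edge x y) (g : X.Edge y z) :
    ∃ (ef : X.Edge w y) (fg : X.Edge x z) (efg : X.Edge w z), Nonempty (e.CompStruct f ef) ∧
      Nonempty (f.CompStruct g fg) ∧ Nonempty (ef.CompStruct g efg) ∧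
      Nonempty (e.CompStruct fg efg) := by
  obtain ⟨s, v, hv, hedge⟩ := exists_edge_eq_of_surjective_spine h₃ (p := ![w, x, y, z])
    (Fin.cons e (Fin.cons f (Fin.cons g finZeroElim)))
  obtain rfl : edge (v 0) (v 1) (hv 0 1 (by decide)) = e := hedge 0
  obtain rfl : edge (v 1) (v 2) (hv 1 2 (by decide)) = f := hedge 1
  obtain rfl : edge (v 2) (v 3) (hv 2 3 (by decide)) = g := hedge 2
  exact ⟨_, _, _, ⟨triangle (v 0) (v 1) (v 2) _ _⟩, ⟨triangle (v 1) (v 2) (v 3) _ _⟩,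
    ⟨triangle (v 0) (v 2) (v 3) _ _⟩, ⟨triangle (v 0) (v 1) (v 3) _ _⟩⟩

/-- A composite of two edges of a simplicial set, chosen among the third edges of the triangles that
they span. -/
noncomputable def edgeComp (h₂ : Function.Surjective (X.spine 2)) (e : X.Edge x y)
    (f : X.Edge y z) : X.Edge x z :=
  (exists_compStruct h₂ e f).choose

lemma edgeComp_eq (h₂ : Function.Bijective (X.spine 2)) {e : X.Edge x y}
    {f : X.Edge y z} {g : X.Edge x z} (t : e.CompStruct f g) : edgeComp h₂.2 e f = g :=
  compStruct_unique h₂.1 (exists_compStruct h₂.2 e f).choose_spec.some t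

/-- The category of vertices and edges of a simplicial set in which composites of edges are unique
and every path of three edges extends to a simplex. -/
noncomputable abbrev edgeCategory (h₂ : Function.Bijective (X.spine 2))
    (h₃ : Function.Surjective (X.spine 3)) : Category.{u} (X _⦋0⦌) where
  Hom x y := X.Edge x y
  id := SSet.Edge.id
  comp := edgeComp h₂.2
  id_comp e := edgeComp_eq h₂ (.idComp e)
  comp_id e := edgeComp_eq h₂ (.compId e)
  assoc e f g := by
    obtain ⟨ef, fg, efg, ⟨tef⟩, ⟨tfg⟩, ⟨t⟩, ⟨t'⟩⟩ := exists_compStruct_assoc h₃ e f g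
    rw [edgeComp_eq h₂ tef, edgeComp_eq h₂ tfg, edgeComp_eq h₂ t, edgeComp_eq h₂ t']

lemma HoCat.homMk_injective (h₂ : Function.Bijective (X.spine 2))
    (h₃ : Function.Surjective (X.spine 3)) :
    Function.Injective (homMk : X.Edge x y → _) := by
  let := edgeCategory h₂ h₃
  let F : HoCat X ⥤ X _⦋0⦌ :=
    SSet.Truncated.HomotopyCategory.lift (fun x => x) (fun e => e) (fun _ => rfl) (edgeComp_eq h₂)
  exact fun e e' h => (SSet.Truncated.HomotopyCategory.lift_map_homMk ..).symm.trans
    ((congr_arg F.map h).trans (SSet.Truncated.HomotopyCategory.lift_map_homMk ..))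

lemma HoCat.homMk_surjective (h₂ : Function.Surjective (X.spine 2)) :
    Function.Surjective (homMk : X.Edge x y → _) := by
  let W : MorphismProperty (HoCat X) :=
    fun a b f => ∃ e : X.Edge a.as.as b.as.as, homMk e = f
  have : W.IsMultiplicative :=
    { id_mem := fun a => ⟨.id a.as.as, homMk_id _⟩
      comp_mem := by
        rintro a b c _ _ ⟨e, rfl⟩ ⟨f, rfl⟩
        obtain ⟨g, ⟨t⟩⟩ := exists_compStruct h₂ e f
        exact ⟨g, (homMk_comp_homMk t).symm⟩ }
  have W_eq_top : W = ⊤ :=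
    SSet.Truncated.HomotopyCategory.morphismProperty_eq_top fun e => ⟨e, rfl⟩
  exact fun f => W_eq_top.ge f trivial

/-- The edges from `x` to `y`, as a subtype of the simplices of dimension one. -/
def edgeEquiv (x y : X _⦋0⦌) :
    {f : X _⦋1⦌ // X.map (SimplexCategory.δ (1 : Fin 2)).op f = x ∧
      X.map (SimplexCategory.δ (0 : Fin 2)).op f = y} ≃ X.Edge x y where
  toFun f := .mk f.1 f.2.1 f.2.2
  invFun e := ⟨e.edge, e.src_eq, e.tgt_eq⟩

end SplxOver

open SplxOver in
theorem hom_in_localization_bijective_general {X : SSet.{u}}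
    (h₂ : Function.Bijective (X.spine 2)) (h₃ : Function.Surjective (X.spine 3)) (x y : X _⦋0⦌) :
    Function.Bijective (fraction : X.Edge x y → _) := by
  have homMk_bijective : Function.Bijective (HoCat.homMk : X.Edge x y → _) :=
    ⟨HoCat.homMk_injective h₂ h₃, HoCat.homMk_surjective h₂.2⟩
  have fraction_eq : fraction = (fractionFunctor X).map ∘ (HoCat.homMk : X.Edge x y → _) :=
    funext fun e => (fractionFunctor_map_homMk e).symm
  exact fraction_eq ▸
    ((hoCatEquivLocalization X).fullyFaithfulFunctor.map_bijective _ _).comp homMk_bijective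

/-- for a strict Segal simplicial set `X` and `x, y ∈ X₀`, the map sending
`f ∈ X₁` with `d₁(f) = x`, `d₀(f) = y` to `p(v_f)⁻¹ ∘ p(u_f)` is a bijection onto
`Hom_{(Δ/X)[lv⁻¹]}(p([0], x), p([0], y))`, where `u_f : ([0], x) ⟶ ([1], f)` is given by
`0 ↦ 0` and the last-vertex morphism `v_f : ([0], y) ⟶ ([1], f)` by `0 ↦ 1`. -/
theorem hom_in_localization_bijective (X : SSet.{u})
    (hX : ∀ m : ℕ, Function.Bijective (X.spine m))
    (x y : X.obj (Opposite.op (SimplexCategory.mk 0))) :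
    Function.Bijective
      (fun f : {f : X.obj (Opposite.op (SimplexCategory.mk 1)) //
          X.map (SimplexCategory.δ (1 : Fin 2)).op f = x ∧
          X.map (SimplexCategory.δ (0 : Fin 2)).op f = y} =>
        ((lastVertex X).Q.map
            (SplxOver.Hom.mk (SimplexCategory.δ (1 : Fin 2)) f.2.1 :
              (⟨SimplexCategory.mk 0, x⟩ : SplxOver X) ⟶ ⟨SimplexCategory.mk 1, f.1⟩) ≫
          (Localization.isoOfHom (lastVertex X).Q (lastVertex X)
            (SplxOver.Hom.mk (SimplexCategory.δ (0 : Fin 2)) f.2.2 :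
              (⟨SimplexCategory.mk 0, y⟩ : SplxOver X) ⟶ ⟨SimplexCategory.mk 1, f.1⟩)
            delta_zero_lastVertex).inv :
          (lastVertex X).Q.obj ⟨SimplexCategory.mk 0, x⟩ ⟶
            (lastVertex X).Q.obj ⟨SimplexCategory.mk 0, y⟩)) :=
  (hom_in_localization_bijective_general (hX 2) (hX 3).2 x y).comp
    (SplxOver.edgeEquiv x y).bijective
end
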